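/- For q ≥ 1, a Dirichlet character χ mod q, and t ≥ 0, the number of zeros ρ = β+iγ of L(s,χ) with 0 < β < 1 and t < γ ≤ t+1 is O(log(q(t+2))). Consequently, for any T₀ ≥ 0 there exists t ∈ (T₀, T₀+1] with min over zeros γ of |t − γ| ≫ 1/log(q(t+2)). -/

import Mathlib

/-!
Let `Φ` be a function of period `q` with `Φ 1 = 1` and `|Φ| ≤ 1`, such as a Dirichlet character.
The factor `s - 1` removes the possible pole of `L(s, Φ)`, so a polynomial bound for
`(s - 1) * L(s, Φ)` on a half-plane containing the critical strip lets Jensen's inequality count the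
zeros. The trapezoidal rule applied to `∑ (n + a) ^ (-s)`, whose error terms are of size
`|s| ^ 3 * n ^ (-re s - 2)`, continues `(s - 1) * ζ(s, a)` to `-1 < re s`; summing over residue
classes gives `(s - 1) * L(s, Φ) ≪ (q * (|s| + 1)) ^ 3` on `-1 / 2 ≤ re s`, uniformly in `q` and
`Φ`. At `2 + i(t + 1 / 2)` the Dirichlet series is bounded away from zero, so Jensen's inequality on
circles around this point allows `O(log (q * (|t| + 2)))` zeros in the box. The gap follows because
`k` ordinates cannot come close to all of `k + 1` equally spaced points.
-/

open Complex Set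

lemma log_mul_pow_le {A X : ℝ} (hA : 1 ≤ A) (hX : 2 ≤ X) (n : ℕ) :
    Real.log (A * X ^ n) ≤ (Real.log A / Real.log 2 + n) * Real.log X := by
  have hlog : Real.log A ≤ Real.log A / Real.log 2 * Real.log X := by
    rw [div_mul_eq_mul_div, le_div_iff₀ (Real.log_pos one_lt_two)]
    gcongr
    exact Real.log_nonneg hA
  rw [Real.log_mul (by positivity) (by positivity), Real.log_pow, add_mul]
  gcongr

lemma exists_forall_le_abs_sub (S : Finset ℝ) {a b δ : ℝ} (hδ : 0 < δ)
    (hab : 2 * (S.card + 1) * δ ≤ b - a) :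
    ∃ t ∈ Icc (a + δ) (b - δ), ∀ y ∈ S, δ ≤ |t - y| := by
  let midpoint (k : ℕ) : ℝ := a + (2 * k + 1) * δ
  suffices ∃ k ∈ Finset.range (S.card + 1), ∀ y ∈ S, δ ≤ |midpoint k - y| by
    obtain ⟨k, hk, hkS⟩ := this
    have hk' : (k : ℝ) ≤ S.card := Nat.cast_le.mpr (Finset.mem_range_succ_iff.mp hk)
    refine ⟨midpoint k, ⟨?_, ?_⟩, hkS⟩ <;>
      nlinarith [show midpoint k = a + (2 * k + 1) * δ from rfl, k.cast_nonneg (α := ℝ)]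
  by_contra! hclose
  choose! y hyS hy using hclose
  obtain ⟨k, hk, l, hl, hkl, hykl⟩ := Finset.exists_ne_map_eq_of_card_lt_of_maps_to
    (by simp : S.card < (Finset.range (S.card + 1)).card) hyS
  have hnear : |midpoint k - midpoint l| < 2 * δ := by
    have := abs_sub_le (midpoint k) (y k) (midpoint l)
    have hyl := hy l hl
    rw [← hykl, abs_sub_comm] at hyl
    linarith [hy k hk]
  have hfar : 1 ≤ |(k : ℝ) - l| := by
    exact_mod_cast Int.one_le_abs (sub_ne_zero.mpr (Nat.cast_injective.ne hkl) : (k : ℤ) - l ≠ 0)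
  rw [show midpoint k - midpoint l = ((k : ℝ) - l) * (2 * δ) by ring, abs_mul,
    abs_of_pos (show 0 < 2 * δ by positivity)] at hnear
  nlinarith

/-! ### Counting zeros by Jensen's inequality -/

section AnalyticOrder

variable {𝕜 E : Type*} [NontriviallyNormedField 𝕜] [NormedAddCommGroup E] [NormedSpace 𝕜 E]
  {f : 𝕜 → E} {U : Set 𝕜} {z : 𝕜}

lemma divisor_eq_analyticOrderNatAt (hf : AnalyticOnNhd 𝕜 f U) (hz : z ∈ U) :
    MeromorphicOn.divisor f U z = analyticOrderNatAt f z := by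
  rw [MeromorphicOn.AnalyticOnNhd.divisor_apply hf hz, analyticOrderNatAt]
  cases analyticOrderAt f z <;> simp

lemma analyticOrderNatAt_ne_zero_iff_of_isPreconnected (hf : AnalyticOnNhd 𝕜 f U)
    (hU : IsPreconnected U) {c : 𝕜} (hc : c ∈ U) (hfc : f c ≠ 0) (hz : z ∈ U) :
    analyticOrderNatAt f z ≠ 0 ↔ f z = 0 := by
  have hfinite : analyticOrderAt f z ≠ ⊤ := by
    refine hf.analyticOrderAt_ne_top_of_isPreconnected hU hc hz ?_
    simp [(hf c hc).analyticOrderAt_eq_zero.mpr hfc]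
  rw [← (hf z hz).analyticOrderAt_ne_zero, ← Nat.cast_analyticOrderNatAt hfinite]
  exact Nat.cast_ne_zero.symm

lemma finite_inter_zeros_of_isCompact {K : Set 𝕜} (hf : AnalyticOnNhd 𝕜 f K)
    (hK : IsCompact K) (hK' : IsPreconnected K) {c : 𝕜} (hc : c ∈ K) (hfc : f c ≠ 0) :
    (K ∩ {z | f z = 0}).Finite := by
  refine ((MeromorphicOn.divisor f K).finiteSupport hK).subset fun z ⟨hz, hfz⟩ ↦ ?_
  rw [Function.mem_support, divisor_eq_analyticOrderNatAt hf hz, Nat.cast_ne_zero]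
  exact (analyticOrderNatAt_ne_zero_iff_of_isPreconnected hf hK' hc hfc hz).mpr hfz

end AnalyticOrder

lemma finsum_mem_analyticOrderNatAt_le_of_norm_le {f : ℂ → ℂ} {c : ℂ} {r R M : ℝ} {S : Set ℂ}
    (hr : 0 < r) (hrR : r < R) (hM : 1 ≤ M) (hf : AnalyticOnNhd ℂ f (Metric.closedBall c R))
    (hfc : f c ≠ 0) (hfM : ∀ z ∈ Metric.sphere c R, ‖f z‖ ≤ M) (hS : S ⊆ Metric.closedBall c r) :
    ((∑ᶠ z ∈ S, analyticOrderNatAt f z : ℕ) : ℝ) ≤ Real.log (M / ‖f c‖) / Real.log (R / r) := by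
  have hf_r := hf.mono (Metric.closedBall_subset_closedBall hrR.le)
  let D := MeromorphicOn.divisor f (Metric.closedBall c r)
  have hD : D.support.Finite := D.finiteSupport (isCompact_closedBall c r)
  have hD_nonneg : 0 ≤ D := MeromorphicOn.AnalyticOnNhd.divisor_nonneg hf_r
  have hle (z : ℂ) : ((S.indicator (analyticOrderNatAt f) z : ℕ) : ℤ) ≤ D z := by
    by_cases hz : z ∈ S
    · rw [indicator_of_mem hz, ← divisor_eq_analyticOrderNatAt hf_r (hS hz)]
    · simpa [indicator_of_notMem hz] using hD_nonneg z
  have hsupp : (S.indicator (analyticOrderNatAt f)).support.Finite := hD.subset fun z hz hDz ↦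
    hz (by simpa [hDz] using hle z)
  have hsum : ((∑ᶠ z ∈ S, analyticOrderNatAt f z : ℕ) : ℤ) ≤ ∑ᶠ z, D z := by
    rw [finsum_mem_def]
    refine (map_finsum (Nat.castAddMonoidHom ℤ) hsupp).trans_le (finsum_le_finsum' ?_ hD hle)
    exact hsupp.subset fun z ↦ by simp
  rw [← abs_of_pos (hr.trans hrR)] at hf hfM
  have hjensen := AnalyticOnNhd.sum_divisor_le (abs_pos.mpr hr.ne')
    (by rwa [abs_of_pos hr, abs_of_pos (hr.trans hrR)]) hM hf hfc hfM
  rw [abs_of_pos hr] at hjensen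
  exact (Int.cast_le.mpr hsum).trans hjensen

lemma ncard_le_finsum_mem {α : Type*} {S : Set α} {m : α → ℕ} (hS : S.Finite)
    (hm : ∀ x ∈ S, m x ≠ 0) : S.ncard ≤ ∑ᶠ x ∈ S, m x := by
  rw [finsum_mem_eq_finite_toFinset_sum m hS, ncard_eq_toFinset_card S hS]
  simpa using hS.toFinset.card_nsmul_le_sum m 1 fun x hx ↦
    Nat.one_le_iff_ne_zero.mpr (hm x (hS.mem_toFinset.mp hx))

/-! ### Trapezoidal rule and the Hurwitz zeta function -/

lemma norm_trapezoid_sub_le {E : Type*} [NormedAddCommGroup E] [NormedSpace ℝ E]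
    {G g g' g'' : ℝ → E} {a b K : ℝ} (hab : a ≤ b)
    (hG : ∀ x ∈ Icc a b, HasDerivWithinAt G (g x) (Icc a b) x)
    (hg : ∀ x ∈ Icc a b, HasDerivWithinAt g (g' x) (Icc a b) x)
    (hg' : ∀ x ∈ Icc a b, HasDerivWithinAt g' (g'' x) (Icc a b) x)
    (hK : ∀ x ∈ Ico a b, ‖g'' x‖ ≤ K) :
    ‖((b - a) / 2) • (g a + g b) - (G b - G a)‖ ≤ K * (b - a) ^ 3 / 12 := by
  let φ : ℝ → E := fun x ↦ ((x - a) / 2) • (g a + g x) - (G x - G a)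
  let φ' : ℝ → E := fun x ↦ (1 / 2 : ℝ) • (g a - g x) + ((x - a) / 2) • g' x
  have hlin (x : ℝ) : HasDerivAt (fun y : ℝ ↦ y - a) 1 x := (hasDerivAt_id x).sub_const a
  have hlin' (x : ℝ) : HasDerivWithinAt (fun y : ℝ ↦ (y - a) / 2) (1 / 2) (Icc a b) x :=
    ((hlin x).div_const 2).hasDerivWithinAt
  have hφ : ∀ x ∈ Icc a b, HasDerivWithinAt φ (φ' x) (Icc a b) x := fun x hx ↦
    (((hlin' x).smul ((hg x hx).const_add (g a))).sub ((hG x hx).sub_const (G a))).congr_deriv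
      (by simp only [φ']; module)
  have hφ' : ∀ x ∈ Icc a b, HasDerivWithinAt φ' (((x - a) / 2) • g'' x) (Icc a b) x :=
    fun x hx ↦ ((((hg x hx).const_sub (g a)).const_smul (1 / 2 : ℝ)).add
      ((hlin' x).smul (hg' x hx))).congr_deriv (by module)
  have hright {f : ℝ → E} {f' : E} {x : ℝ} (hx : x ∈ Ico a b)
      (hf : HasDerivWithinAt f f' (Icc a b) x) : HasDerivWithinAt f f' (Ici x) x :=
    hf.mono_of_mem_nhdsWithin (Icc_mem_nhdsGE_of_mem hx)
  have hφ'_le : ∀ x ∈ Icc a b, ‖φ' x‖ ≤ K * (x - a) ^ 2 / 4 :=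
    image_norm_le_of_norm_deriv_right_le_deriv_boundary
      (fun x hx ↦ (hφ' x hx).continuousWithinAt)
      (fun x hx ↦ hright hx (hφ' x (Ico_subset_Icc_self hx)))
      (by simp [φ'])
      (fun x ↦ (((hlin x).pow 2).const_mul K).div_const 4)
      (fun x hx ↦ by
        rw [norm_smul, Real.norm_of_nonneg (by linarith [hx.1])]
        nlinarith [hK x hx, hx.1])
  exact image_norm_le_of_norm_deriv_right_le_deriv_boundary (f := φ)
    (B := fun x ↦ K * (x - a) ^ 3 / 12)
    (fun x hx ↦ (hφ x hx).continuousWithinAt)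
    (fun x hx ↦ hright hx (hφ x (Ico_subset_Icc_self hx)))
    (by simp [φ])
    (fun x ↦ (((hlin x).pow 3).const_mul K).div_const 12)
    (fun x hx ↦ (hφ'_le x (Ico_subset_Icc_self hx)).trans_eq (by push_cast; ring))
    (right_mem_Icc.mpr hab)

lemma hasDerivAt_ofReal_cpow_const_of_pos {x : ℝ} (hx : 0 < x) (w : ℂ) :
    HasDerivAt (fun y : ℝ ↦ (y : ℂ) ^ w) (w * (x : ℂ) ^ (w - 1)) x := by
  simpa using ((hasDerivAt_id (x : ℂ)).cpow_const (c := w)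
    (Or.inl (by simpa using hx))).comp_ofReal

/-- The error of the trapezoidal rule, rule minus integral, for
`∫ u in x..(x + 1), w * u ^ (w - 1)`. With `w = 1 - s` it is the general term of the convergent
series in `hurwitzZeta₁`. -/
noncomputable def cpowTrapezoidError (w : ℂ) (x : ℝ) : ℂ :=
  w / 2 * ((x : ℂ) ^ (w - 1) + (x + 1 : ℂ) ^ (w - 1)) - ((x + 1 : ℂ) ^ w - (x : ℂ) ^ w)

lemma norm_cpowTrapezoidError_le {w : ℂ} {x : ℝ} (hx : 0 < x) (hw : w.re ≤ 3) :
    ‖cpowTrapezoidError w x‖ ≤ ‖w * (w - 1) * (w - 2)‖ * x ^ (w.re - 3) / 12 := by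
  have hderiv (c v : ℂ) : ∀ u ∈ Icc x (x + 1), HasDerivWithinAt
      (fun y : ℝ ↦ c * (y : ℂ) ^ v) (c * v * (u : ℂ) ^ (v - 1)) (Icc x (x + 1)) u :=
    fun u hu ↦ (((hasDerivAt_ofReal_cpow_const_of_pos (hx.trans_le hu.1) v).const_mul c).congr_deriv
      (mul_assoc _ _ _).symm).hasDerivWithinAt
  have hthird : ∀ u ∈ Ico x (x + 1), ‖1 * w * (w - 1) * (w - 1 - 1) * (u : ℂ) ^ (w - 1 - 1 - 1)‖ ≤
      ‖w * (w - 1) * (w - 2)‖ * x ^ (w.re - 3) := fun u hu ↦ by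
    rw [norm_mul, norm_cpow_eq_rpow_re_of_pos (hx.trans_le hu.1), one_mul,
      show w - 1 - 1 = w - 2 by ring, show (w - 2 - 1).re = w.re - 3 by simp; ring]
    exact mul_le_mul_of_nonneg_left (Real.rpow_le_rpow_of_nonpos hx hu.1 (by linarith))
      (norm_nonneg _)
  have htrap := norm_trapezoid_sub_le (by linarith) (hderiv 1 w) (hderiv _ _) (hderiv _ _) hthird
  simp only [add_sub_cancel_left, real_smul, one_mul, one_pow, mul_one] at htrap
  refine le_of_eq_of_le ?_ htrap
  rw [cpowTrapezoidError]
  congr 1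
  push_cast
  ring

lemma norm_cpowTrapezoidError_one_sub_le {σ₀ a : ℝ} {s : ℂ} (hσ₀ : -2 ≤ σ₀) (hs : σ₀ ≤ s.re)
    (ha : a ∈ Ioc 0 1) (n : ℕ) :
    ‖cpowTrapezoidError (1 - s) (n + a)‖ ≤
      (‖s‖ + 1) ^ 3 * a ^ (-s.re - 2) * (n + 1 : ℝ) ^ (-σ₀ - 2) := by
  obtain ⟨ha₀, ha₁⟩ := ha
  have hpow : (n + a : ℝ) ^ (-s.re - 2) ≤ a ^ (-s.re - 2) * (n + 1 : ℝ) ^ (-σ₀ - 2) :=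
    calc (n + a : ℝ) ^ (-s.re - 2) ≤ (a * (n + 1)) ^ (-s.re - 2) :=
          Real.rpow_le_rpow_of_nonpos (by positivity)
            (by nlinarith [n.cast_nonneg (α := ℝ)]) (by linarith)
      _ = a ^ (-s.re - 2) * (n + 1 : ℝ) ^ (-s.re - 2) := Real.mul_rpow ha₀.le (by positivity)
      _ ≤ a ^ (-s.re - 2) * (n + 1 : ℝ) ^ (-σ₀ - 2) := by
          gcongr
          simp
  have hpoly : ‖(1 - s) * (1 - s - 1) * (1 - s - 2)‖ ≤ (‖s‖ + 1) ^ 3 :=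
    calc ‖(1 - s) * (1 - s - 1) * (1 - s - 2)‖ = ‖1 - s‖ * ‖s‖ * ‖1 + s‖ := by
          rw [norm_mul, norm_mul, ← norm_neg (1 - s - 1), ← norm_neg (1 - s - 2)]
          ring_nf
      _ ≤ (‖s‖ + 1) * (‖s‖ + 1) * (‖s‖ + 1) := by
          gcongr
          · simpa [add_comm] using norm_sub_le 1 s
          · simp
          · simpa [add_comm] using norm_add_le 1 s
      _ = (‖s‖ + 1) ^ 3 := by ring
  calc ‖cpowTrapezoidError (1 - s) (n + a)‖
      ≤ ‖(1 - s) * (1 - s - 1) * (1 - s - 2)‖ * (n + a : ℝ) ^ ((1 - s).re - 3) / 12 := by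
        refine norm_cpowTrapezoidError_le (by positivity) ?_
        rw [sub_re, one_re]
        linarith
    _ ≤ ‖(1 - s) * (1 - s - 1) * (1 - s - 2)‖ * (n + a : ℝ) ^ (-s.re - 2) := by
        rw [show (1 - s).re - 3 = -s.re - 2 by rw [sub_re, one_re]; ring]
        exact div_le_self (by positivity) (by norm_num)
    _ ≤ (‖s‖ + 1) ^ 3 * (a ^ (-s.re - 2) * (n + 1 : ℝ) ^ (-σ₀ - 2)) := by gcongr
    _ = _ := by ring

lemma differentiable_cpowTrapezoidError_one_sub {x : ℝ} (hx : 0 < x) :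
    Differentiable ℂ fun s ↦ cpowTrapezoidError (1 - s) x := by
  have hx₀ : (x : ℂ) ≠ 0 := ofReal_ne_zero.mpr hx.ne'
  have hx₁ : (x + 1 : ℂ) ≠ 0 := by exact_mod_cast (show x + 1 ≠ 0 by positivity)
  simp only [cpowTrapezoidError]
  fun_prop (disch := simp [hx₀, hx₁])

lemma summable_natCast_add_one_rpow {p : ℝ} (hp : p < -1) :
    Summable fun n : ℕ ↦ (n + 1 : ℝ) ^ p := by
  simpa using (summable_nat_add_iff 1).mpr (Real.summable_nat_rpow.mpr hp)

/-- The Euler–Maclaurin continuation of `(s - 1) * ζ(s, a)` to the half-plane `-1 < re s`: the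
integral `∫ u in a.., u ^ (-s)` gives the term `a ^ (1 - s)`, and the trapezoidal rule on the
intervals `[n + a, n + 1 + a]` gives the rest. Like `riemannZeta₁`, it has no pole at `1`. -/
noncomputable def hurwitzZeta₁ (a : ℝ) (s : ℂ) : ℂ :=
  (s - 1) / 2 * (a : ℂ) ^ (-s) + (a : ℂ) ^ (1 - s) -
    ∑' n : ℕ, cpowTrapezoidError (1 - s) (n + a)

lemma differentiableOn_hurwitzZeta₁ {a : ℝ} (ha : a ∈ Ioc 0 1) :
    DifferentiableOn ℂ (hurwitzZeta₁ a) {s | -1 < s.re} := by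
  intro s hs
  obtain ⟨σ₀, hσ₀, hσ₀s⟩ := exists_between (show -1 < s.re from hs)
  have ha₀ : 0 < a := ha.1
  let U : Set ℂ := {z | σ₀ < z.re} ∩ Metric.ball 0 (‖s‖ + 1)
  have hU : IsOpen U := (isOpen_lt continuous_const continuous_re).inter Metric.isOpen_ball
  have hsU : s ∈ U := ⟨hσ₀s, by simp⟩
  have htsum : DifferentiableOn ℂ
      (fun z ↦ ∑' n : ℕ, cpowTrapezoidError (1 - z) (n + a)) U := by
    refine differentiableOn_tsum_of_summable_norm
      (u := fun n : ℕ ↦ (‖s‖ + 2) ^ 3 * a ^ (-(‖s‖ + 1) - 2) * (n + 1 : ℝ) ^ (-σ₀ - 2))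
      ((summable_natCast_add_one_rpow (by linarith)).mul_left _)
      (fun n ↦ (differentiable_cpowTrapezoidError_one_sub
        (by positivity)).differentiableOn) hU fun n z hz ↦ ?_
    have hz_norm : ‖z‖ < ‖s‖ + 1 := mem_ball_zero_iff.mp hz.2
    have hz_norm' : ‖z‖ + 1 ≤ ‖s‖ + 2 := by linarith
    have ha_pow : a ^ (-z.re - 2) ≤ a ^ (-(‖s‖ + 1) - 2) :=
      Real.rpow_le_rpow_of_exponent_ge ha₀ ha.2 (by linarith [re_le_norm z])
    exact (norm_cpowTrapezoidError_one_sub_le (by linarith) hz.1.le ha n).trans (by gcongr)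
  have hmain : Differentiable ℂ fun z : ℂ ↦ (z - 1) / 2 * (a : ℂ) ^ (-z) + (a : ℂ) ^ (1 - z) := by
    fun_prop (disch := simp [ha₀.ne'])
  exact ((hmain.differentiableOn.sub htsum).differentiableAt
    (hU.mem_nhds hsU)).differentiableWithinAt

lemma norm_hurwitzZeta₁_le {σ₀ a : ℝ} {s : ℂ} (hσ₀ : -1 < σ₀) (hs : σ₀ ≤ s.re)
    (ha : a ∈ Ioc 0 1) :
    ‖hurwitzZeta₁ a s‖ ≤
      (∑' n : ℕ, (n + 1 : ℝ) ^ (-σ₀ - 2) + 2) * (‖s‖ + 1) ^ 3 * a ^ (-s.re - 2) := by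
  have hsum := summable_natCast_add_one_rpow (p := -σ₀ - 2) (by linarith)
  have htsum : ‖∑' n : ℕ, cpowTrapezoidError (1 - s) (n + a)‖ ≤
      (‖s‖ + 1) ^ 3 * a ^ (-s.re - 2) * ∑' n : ℕ, (n + 1 : ℝ) ^ (-σ₀ - 2) :=
    tsum_of_norm_bounded (hsum.hasSum.mul_left _)
      (norm_cpowTrapezoidError_one_sub_le (by linarith) hs ha)
  have hpow {w : ℂ} (hw : -s.re - 2 ≤ w.re) : ‖(a : ℂ) ^ w‖ ≤ a ^ (-s.re - 2) := by
    rw [norm_cpow_eq_rpow_re_of_pos ha.1]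
    exact Real.rpow_le_rpow_of_exponent_ge ha.1 ha.2 hw
  have hone : 1 ≤ (‖s‖ + 1) ^ 3 := one_le_pow₀ (by linarith [norm_nonneg s])
  have hsub : ‖(s - 1) / 2‖ ≤ (‖s‖ + 1) ^ 3 :=
    calc ‖(s - 1) / 2‖ ≤ ‖s - 1‖ := by
          rw [norm_div, norm_ofNat]
          exact div_le_self (norm_nonneg _) one_le_two
      _ ≤ ‖s‖ + 1 := by simpa using norm_sub_le s 1
      _ ≤ (‖s‖ + 1) ^ 3 := le_self_pow₀ (by linarith [norm_nonneg s]) three_ne_zero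
  calc ‖hurwitzZeta₁ a s‖
      ≤ ‖(s - 1) / 2‖ * ‖(a : ℂ) ^ (-s)‖ + 1 * ‖(a : ℂ) ^ (1 - s)‖ +
          ‖∑' n : ℕ, cpowTrapezoidError (1 - s) (n + a)‖ := by
        rw [one_mul, ← norm_mul]
        exact (norm_sub_le _ _).trans (by gcongr; exact norm_add_le _ _)
    _ ≤ (‖s‖ + 1) ^ 3 * a ^ (-s.re - 2) + (‖s‖ + 1) ^ 3 * a ^ (-s.re - 2) +
          (‖s‖ + 1) ^ 3 * a ^ (-s.re - 2) * ∑' n : ℕ, (n + 1 : ℝ) ^ (-σ₀ - 2) := by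
        gcongr
        · exact hpow (by simp)
        · exact hpow (by rw [sub_re, one_re]; linarith)
    _ = _ := by ring

lemma hurwitzZeta₁_eq_of_two_lt_re {a : ℝ} (ha : a ∈ Ioc 0 1) {s : ℂ} (hs : 2 < s.re) :
    hurwitzZeta₁ a s = (s - 1) * HurwitzZeta.hurwitzZeta a s := by
  have hsum {w : ℂ} (hw : 1 < w.re) :
      HasSum (fun n : ℕ ↦ (n + a : ℂ) ^ (-w)) (HurwitzZeta.hurwitzZeta a w) := by
    simpa only [cpow_neg, one_div] using
      HurwitzZeta.hasSum_hurwitzZeta_of_one_lt_re (Ioc_subset_Icc_self ha) hw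
  have hsum_succ {w : ℂ} (hw : 1 < w.re) : HasSum (fun n : ℕ ↦ (n + a + 1 : ℂ) ^ (-w))
      (HurwitzZeta.hurwitzZeta a w - (a : ℂ) ^ (-w)) := by
    simpa [add_right_comm] using (hasSum_nat_add_iff' 1).mpr (hsum hw)
  have hs₁ : 1 < s.re := by linarith
  have hs₂ : 1 < (s - 1).re := by rw [sub_re, one_re]; linarith
  have herror := (((hsum hs₁).add (hsum_succ hs₁)).mul_left ((1 - s) / 2)).sub
    ((hsum_succ hs₂).sub (hsum hs₂))
  have htsum : ∑' n : ℕ, cpowTrapezoidError (1 - s) (n + a) =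
      (1 - s) / 2 * (2 * HurwitzZeta.hurwitzZeta a s - (a : ℂ) ^ (-s)) + (a : ℂ) ^ (1 - s) := by
    convert herror.tsum_eq using 1
    · refine tsum_congr fun n ↦ ?_
      rw [cpowTrapezoidError]
      push_cast
      ring_nf
    · ring_nf
  rw [hurwitzZeta₁, htsum]
  ring

lemma differentiable_update_sub_one_mul_hurwitzZeta (x : UnitAddCircle) :
    Differentiable ℂ (Function.update (fun s ↦ (s - 1) * HurwitzZeta.hurwitzZeta x s) 1 1) := by
  rw [← differentiableOn_univ, ← differentiableOn_compl_singleton_and_continuousAt_iff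
    (c := 1) Filter.univ_mem]
  constructor
  · refine DifferentiableOn.congr (f := fun s ↦ (s - 1) * HurwitzZeta.hurwitzZeta x s)
      (fun s hs ↦ ?_) fun s hs ↦ Function.update_of_ne hs.2 _ _
    exact ((differentiableAt_id.sub_const 1).mul
      (HurwitzZeta.differentiableAt_hurwitzZeta x hs.2)).differentiableWithinAt
  · exact continuousAt_update_same.mpr (HurwitzZeta.hurwitzZeta_residue_one x)

lemma hurwitzZeta₁_eq {a : ℝ} (ha : a ∈ Ioc 0 1) {s : ℂ} (hs : -1 < s.re) (hs₁ : s ≠ 1) :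
    hurwitzZeta₁ a s = (s - 1) * HurwitzZeta.hurwitzZeta a s := by
  let F := Function.update (fun s ↦ (s - 1) * HurwitzZeta.hurwitzZeta a s) 1 1
  have hF {z : ℂ} (hz : z ≠ 1) : F z = (z - 1) * HurwitzZeta.hurwitzZeta a z :=
    Function.update_of_ne hz _ _
  have hopen (σ : ℝ) : IsOpen {z : ℂ | σ < z.re} := isOpen_lt continuous_const continuous_re
  have heq : EqOn (hurwitzZeta₁ a) F {z | -1 < z.re} := by
    refine AnalyticOnNhd.eqOn_of_preconnected_of_eventuallyEq (z₀ := 3)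
      ((differentiableOn_hurwitzZeta₁ ha).analyticOnNhd (hopen _))
      ((differentiable_update_sub_one_mul_hurwitzZeta a).differentiableOn.analyticOnNhd (hopen _))
      (convex_halfSpace_re_gt (-1)).isPreconnected (by norm_num) ?_
    filter_upwards [(hopen 2).mem_nhds (show 2 < (3 : ℂ).re by norm_num)] with z hz
    rw [hurwitzZeta₁_eq_of_two_lt_re ha hz, hF]
    rintro rfl
    norm_num at hz
  rw [heq hs, hF hs₁]

/-! ### L-functions of periodic sequences -/

section PeriodicLFunction

variable {N : ℕ} [NeZero N]

/-- The representative in `(0, 1]` of `j / N` modulo `1`. Residue `0` goes to `1` rather than `0`,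
so that the powers of the representative occurring in `hurwitzZeta₁` are not degenerate. -/
noncomputable def fractionalRep (j : ZMod N) : ℝ := ((j - 1).val + 1) / N

lemma fractionalRep_mem_Ioc (j : ZMod N) : fractionalRep j ∈ Ioc 0 1 := by
  have hN : (0 : ℝ) < N := Nat.cast_pos.mpr (NeZero.pos N)
  refine ⟨by rw [fractionalRep]; positivity, (div_le_one hN).mpr ?_⟩
  exact_mod_cast (j - 1).val_lt

lemma one_le_natCast_mul_fractionalRep (j : ZMod N) : 1 ≤ N * fractionalRep j := by
  rw [fractionalRep, mul_div_cancel₀ _ (NeZero.ne (N : ℝ))]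
  exact le_add_of_nonneg_left (Nat.cast_nonneg _)

lemma coe_fractionalRep (j : ZMod N) : (fractionalRep j : UnitAddCircle) = ZMod.toAddCircle j := by
  have hj : (((j - 1).val + 1 : ℕ) : ZMod N) = j := by simp
  rw [← hj, ZMod.toAddCircle_natCast, hj, fractionalRep]
  push_cast
  rfl

/-- The continuation of `(s - 1) * L(s, Φ)` to `-1 < re s` without a pole at `1`, where `L(s, Φ)` is
the L-function `ZMod.LFunction Φ` of a periodic sequence `Φ`. -/
noncomputable def LFunction₁ (Φ : ZMod N → ℂ) (s : ℂ) : ℂ :=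
  (N : ℂ) ^ (-s) * ∑ j, Φ j * hurwitzZeta₁ (fractionalRep j) s

variable {Φ : ZMod N → ℂ} {s : ℂ}

lemma analyticOnNhd_LFunction₁ (Φ : ZMod N → ℂ) :
    AnalyticOnNhd ℂ (LFunction₁ Φ) {s | -1 < s.re} := by
  refine DifferentiableOn.analyticOnNhd ?_ (isOpen_lt continuous_const continuous_re)
  have hN : Differentiable ℂ fun s : ℂ ↦ (N : ℂ) ^ (-s) := by
    fun_prop (disch := simp [NeZero.ne N])
  exact hN.differentiableOn.mul (DifferentiableOn.fun_sum fun j _ ↦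
    (differentiableOn_hurwitzZeta₁ (fractionalRep_mem_Ioc j)).const_mul _)

lemma LFunction₁_eq (Φ : ZMod N → ℂ) (hs : -1 < s.re) (hs₁ : s ≠ 1) :
    LFunction₁ Φ s = (s - 1) * ZMod.LFunction Φ s := by
  simp only [LFunction₁, ZMod.LFunction, hurwitzZeta₁_eq (fractionalRep_mem_Ioc _) hs hs₁,
    coe_fractionalRep, Finset.mul_sum]
  exact Finset.sum_congr rfl fun j _ ↦ by ring

lemma norm_LFunction₁_le {σ₀ : ℝ} (hΦ : ∀ j, ‖Φ j‖ ≤ 1) (hσ₀ : -1 < σ₀) (hs : σ₀ ≤ s.re) :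
    ‖LFunction₁ Φ s‖ ≤ (∑' n : ℕ, (n + 1 : ℝ) ^ (-σ₀ - 2) + 2) * (N * (‖s‖ + 1)) ^ 3 := by
  have hN : (0 : ℝ) < N := Nat.cast_pos.mpr (NeZero.pos N)
  set K := ∑' n : ℕ, (n + 1 : ℝ) ^ (-σ₀ - 2) + 2
  have : 0 ≤ K := add_nonneg (tsum_nonneg fun n ↦ by positivity) zero_le_two
  have hrep (j : ZMod N) : fractionalRep j ^ (-s.re - 2) ≤ (N : ℝ) ^ (s.re + 2) :=
    calc fractionalRep j ^ (-s.re - 2) ≤ ((N : ℝ)⁻¹) ^ (-s.re - 2) :=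
          Real.rpow_le_rpow_of_nonpos (by positivity)
            ((inv_le_iff_one_le_mul₀' hN).mpr (one_le_natCast_mul_fractionalRep j)) (by linarith)
      _ = (N : ℝ) ^ (s.re + 2) := by
          rw [Real.inv_rpow hN.le, ← Real.rpow_neg hN.le]
          ring_nf
  have hterm (j : ZMod N) : ‖Φ j * hurwitzZeta₁ (fractionalRep j) s‖ ≤
      K * (‖s‖ + 1) ^ 3 * (N : ℝ) ^ (s.re + 2) :=
    calc _ ≤ 1 * (K * (‖s‖ + 1) ^ 3 * fractionalRep j ^ (-s.re - 2)) := by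
          rw [norm_mul]
          gcongr
          exacts [hΦ j, norm_hurwitzZeta₁_le hσ₀ hs (fractionalRep_mem_Ioc j)]
      _ ≤ _ := by
          rw [one_mul]
          gcongr
          exact hrep j
  calc ‖LFunction₁ Φ s‖
      ≤ (N : ℝ) ^ (-s.re) * ∑ _j : ZMod N, K * (‖s‖ + 1) ^ 3 * (N : ℝ) ^ (s.re + 2) := by
        rw [LFunction₁, norm_mul, norm_natCast_cpow_of_pos (NeZero.pos N), neg_re]
        gcongr
        exact norm_sum_le_of_le _ fun j _ ↦ hterm j
    _ = K * (‖s‖ + 1) ^ 3 * N * ((N : ℝ) ^ (-s.re) * (N : ℝ) ^ (s.re + 2)) := by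
        rw [Finset.sum_const, Finset.card_univ, ZMod.card, nsmul_eq_mul]
        ring
    _ = K * (N * (‖s‖ + 1)) ^ 3 := by
        rw [← Real.rpow_add hN, neg_add_cancel_left, Real.rpow_two]
        ring

end PeriodicLFunction

lemma one_quarter_le_norm_LSeries {f : ℕ → ℂ} {s : ℂ} (hf₁ : f 1 = 1) (hf : ∀ n, ‖f n‖ ≤ 1)
    (hs : 2 ≤ s.re) : 1 / 4 ≤ ‖LSeries f s‖ := by
  have hterm (n : ℕ) : ‖LSeries.term f s n‖ ≤ 1 / (n : ℝ) ^ 2 := by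
    rcases eq_or_ne n 0 with rfl | hn
    · simp
    have hn₁ : (1 : ℝ) ≤ n := Nat.one_le_cast.mpr (Nat.one_le_iff_ne_zero.mpr hn)
    rw [LSeries.norm_term_eq, if_neg hn, ← Real.rpow_two]
    gcongr
    exact hf n
  have hsum : Summable (LSeries.term f s) :=
    .of_norm_bounded (Real.summable_one_div_nat_pow.mpr one_lt_two) hterm
  have hsplit : LSeries f s - 1 = ∑' n : ℕ, LSeries.term f s (n + 2) := by
    rw [LSeries, ← hsum.sum_add_tsum_nat_add 2]
    simp [Finset.sum_range_succ, LSeries.term, hf₁]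
  have htail : HasSum (fun n : ℕ ↦ 1 / ((n + 2 : ℕ) : ℝ) ^ 2) (Real.pi ^ 2 / 6 - 1) := by
    simpa [Finset.sum_range_succ] using (hasSum_nat_add_iff' 2).mpr hasSum_zeta_two
  have hnorm : ‖1 - LSeries f s‖ ≤ Real.pi ^ 2 / 6 - 1 := by
    rw [norm_sub_rev, hsplit]
    exact tsum_of_norm_bounded htail fun n ↦ hterm (n + 2)
  have htriangle : 1 - ‖LSeries f s‖ ≤ ‖1 - LSeries f s‖ := by
    simpa using norm_sub_norm_le 1 (LSeries f s)
  nlinarith [Real.pi_lt_d2, Real.pi_pos]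

/-! ### Zeros in the critical strip -/

/-- The zeros of `L(s, Φ)` in the critical strip with ordinate in `(t, t + 1]`, the set to be
counted. -/
def criticalZeros {N : ℕ} [NeZero N] (Φ : ZMod N → ℂ) (t : ℝ) : Set ℂ :=
  {ρ | ZMod.LFunction Φ ρ = 0 ∧ 0 < ρ.re ∧ ρ.re < 1 ∧ t < ρ.im ∧ ρ.im ≤ t + 1}

/-- The centre of the circles to which Jensen's inequality is applied: it lies in the half-plane of
absolute convergence, at the height of the middle of the box containing `criticalZeros Φ t`. The
inner radius `21 / 10` covers that box and the outer radius `5 / 2` stays inside `-1 / 2 ≤ re s`. -/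
noncomputable def jensenCenter (t : ℝ) : ℂ := ⟨2, t + 1 / 2⟩

lemma neg_half_le_re_of_mem_closedBall_jensenCenter {t : ℝ} {z : ℂ}
    (hz : z ∈ Metric.closedBall (jensenCenter t) (5 / 2)) : -1 / 2 ≤ z.re := by
  have hre : |z.re - 2| ≤ 5 / 2 :=
    (abs_re_le_norm (z - jensenCenter t)).trans (mem_closedBall_iff_norm.mp hz)
  linarith [(abs_le.mp hre).1]

lemma norm_add_one_le_of_mem_closedBall_jensenCenter {t : ℝ} {z : ℂ}
    (hz : z ∈ Metric.closedBall (jensenCenter t) (5 / 2)) : ‖z‖ + 1 ≤ 3 * (|t| + 2) := by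
  have hcenter : ‖jensenCenter t‖ ≤ 2 + |t + 1 / 2| := by
    simpa [jensenCenter] using norm_le_abs_re_add_abs_im (jensenCenter t)
  have hhalf : |t + 1 / 2| ≤ |t| + 1 / 2 := by simpa using abs_add_le t (1 / 2)
  linarith [norm_le_norm_add_norm_sub' z (jensenCenter t), mem_closedBall_iff_norm.mp hz,
    abs_nonneg t]

section CriticalZeros

variable {N : ℕ} [NeZero N] {Φ : ZMod N → ℂ} {s : ℂ}

lemma criticalZeros_subset_closedBall (Φ : ZMod N → ℂ) (t : ℝ) :
    criticalZeros Φ t ⊆ Metric.closedBall (jensenCenter t) (21 / 10) := by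
  rintro ρ ⟨-, hre₀, hre₁, him₀, him₁⟩
  rw [mem_closedBall_iff_norm]
  refine abs_le_of_sq_le_sq' ?_ (by norm_num) |>.2
  rw [← normSq_eq_norm_sq, normSq_apply]
  simp only [jensenCenter, sub_re, sub_im]
  nlinarith

lemma analyticOrderNatAt_LFunction₁ (Φ : ZMod N → ℂ) (hs : -1 < s.re) (hs₁ : s ≠ 1) :
    analyticOrderNatAt (LFunction₁ Φ) s = analyticOrderNatAt (ZMod.LFunction Φ) s := by
  have hL : AnalyticAt ℂ (ZMod.LFunction Φ) s := by
    refine DifferentiableOn.analyticAt (s := {1}ᶜ) (fun z hz ↦ ?_) (isOpen_ne.mem_nhds hs₁)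
    exact (ZMod.differentiableAt_LFunction Φ z (Or.inl hz)).differentiableWithinAt
  have hsub : AnalyticAt ℂ (fun z : ℂ ↦ z - 1) s := by fun_prop
  have heq : LFunction₁ Φ =ᶠ[nhds s] (fun z ↦ z - 1) * ZMod.LFunction Φ := by
    filter_upwards [(isOpen_lt continuous_const continuous_re).mem_nhds hs,
      isOpen_ne.mem_nhds hs₁] with z hz hz₁ using LFunction₁_eq Φ hz hz₁
  rw [analyticOrderNatAt, analyticOrderNatAt, analyticOrderAt_congr heq,
    analyticOrderAt_mul hsub hL, hsub.analyticOrderAt_eq_zero.mpr (sub_ne_zero.mpr hs₁), zero_add]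

lemma one_quarter_le_norm_LFunction₁ (hΦ₁ : Φ 1 = 1) (hΦ : ∀ j, ‖Φ j‖ ≤ 1) (hs : 2 ≤ s.re) :
    1 / 4 ≤ ‖LFunction₁ Φ s‖ := by
  have hs₁ : s ≠ 1 := by rintro rfl; norm_num at hs
  have hsub : 1 ≤ ‖s - 1‖ := by
    have := re_le_norm (s - 1)
    rw [sub_re, one_re] at this
    linarith
  rw [LFunction₁_eq Φ (by linarith) hs₁, norm_mul, ZMod.LFunction_eq_LSeries Φ (by linarith)]
  exact (one_quarter_le_norm_LSeries (by simpa using hΦ₁) (fun n ↦ hΦ n) hs).trans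
    (le_mul_of_one_le_left (norm_nonneg _) hsub)

lemma LFunction₁_ne_zero (hΦ₁ : Φ 1 = 1) (hΦ : ∀ j, ‖Φ j‖ ≤ 1) (hs : 2 ≤ s.re) :
    LFunction₁ Φ s ≠ 0 :=
  norm_pos_iff.mp ((by norm_num : (0 : ℝ) < 1 / 4).trans_le
    (one_quarter_le_norm_LFunction₁ hΦ₁ hΦ hs))

lemma analyticOnNhd_LFunction₁_closedBall_jensenCenter (Φ : ZMod N → ℂ) (t : ℝ) {r : ℝ}
    (hr : r ≤ 5 / 2) : AnalyticOnNhd ℂ (LFunction₁ Φ) (Metric.closedBall (jensenCenter t) r) :=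
  (analyticOnNhd_LFunction₁ Φ).mono fun z hz ↦ by
    have := neg_half_le_re_of_mem_closedBall_jensenCenter
      (Metric.closedBall_subset_closedBall hr hz)
    exact show -1 < z.re by linarith

lemma LFunction₁_eq_zero_of_mem_criticalZeros {t : ℝ} (hs : s ∈ criticalZeros Φ t) :
    LFunction₁ Φ s = 0 := by
  obtain ⟨hL, hre₀, hre₁, -⟩ := hs
  rw [LFunction₁_eq Φ (by linarith) (by rintro rfl; simp at hre₁), hL, mul_zero]

lemma analyticOrderNatAt_LFunction₁_of_mem_criticalZeros {t : ℝ} (hs : s ∈ criticalZeros Φ t) :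
    analyticOrderNatAt (LFunction₁ Φ) s = analyticOrderNatAt (ZMod.LFunction Φ) s := by
  obtain ⟨-, hre₀, hre₁, -⟩ := hs
  exact analyticOrderNatAt_LFunction₁ Φ (by linarith) (by rintro rfl; simp at hre₁)

lemma analyticOrderNatAt_LFunction_ne_zero (hΦ₁ : Φ 1 = 1) (hΦ : ∀ j, ‖Φ j‖ ≤ 1) {t : ℝ}
    (hs : s ∈ criticalZeros Φ t) : analyticOrderNatAt (ZMod.LFunction Φ) s ≠ 0 := by
  rw [← analyticOrderNatAt_LFunction₁_of_mem_criticalZeros hs,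
    analyticOrderNatAt_ne_zero_iff_of_isPreconnected
      (analyticOnNhd_LFunction₁_closedBall_jensenCenter Φ t (by norm_num))
      (convex_closedBall _ _).isPreconnected (Metric.mem_closedBall_self (by norm_num))
      (LFunction₁_ne_zero hΦ₁ hΦ le_rfl) (criticalZeros_subset_closedBall Φ t hs)]
  exact LFunction₁_eq_zero_of_mem_criticalZeros hs

lemma finite_criticalZeros (hΦ₁ : Φ 1 = 1) (hΦ : ∀ j, ‖Φ j‖ ≤ 1) (t : ℝ) :
    (criticalZeros Φ t).Finite := by
  refine (finite_inter_zeros_of_isCompact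
    (analyticOnNhd_LFunction₁_closedBall_jensenCenter Φ t (by norm_num))
    (isCompact_closedBall (jensenCenter t) (21 / 10)) (convex_closedBall _ _).isPreconnected
    (Metric.mem_closedBall_self (by norm_num)) (LFunction₁_ne_zero hΦ₁ hΦ le_rfl)).subset ?_
  exact fun ρ hρ ↦
    ⟨criticalZeros_subset_closedBall Φ t hρ, LFunction₁_eq_zero_of_mem_criticalZeros hρ⟩

lemma two_le_natCast_mul_abs_add_two (N : ℕ) [NeZero N] (t : ℝ) : 2 ≤ N * (|t| + 2) := by
  have hN : (1 : ℝ) ≤ N := Nat.one_le_cast.mpr NeZero.one_le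
  nlinarith [abs_nonneg t]

lemma norm_LFunction₁_le_of_mem_closedBall_jensenCenter (hΦ : ∀ j, ‖Φ j‖ ≤ 1) {t : ℝ}
    (hs : s ∈ Metric.closedBall (jensenCenter t) (5 / 2)) :
    ‖LFunction₁ Φ s‖ ≤
      27 * (∑' n : ℕ, (n + 1 : ℝ) ^ (-3 / 2 : ℝ) + 2) * (N * (|t| + 2)) ^ 3 := by
  have hbound := norm_LFunction₁_le hΦ (by norm_num)
    (neg_half_le_re_of_mem_closedBall_jensenCenter hs)
  rw [show (-(-1 / 2) - 2 : ℝ) = -3 / 2 by norm_num] at hbound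
  have : 0 ≤ ∑' n : ℕ, (n + 1 : ℝ) ^ (-3 / 2 : ℝ) := tsum_nonneg fun n ↦ by positivity
  calc ‖LFunction₁ Φ s‖ ≤ _ := hbound
    _ ≤ (∑' n : ℕ, (n + 1 : ℝ) ^ (-3 / 2 : ℝ) + 2) * (N * (3 * (|t| + 2))) ^ 3 := by
        gcongr
        exact norm_add_one_le_of_mem_closedBall_jensenCenter hs
    _ = _ := by ring

lemma finsum_analyticOrderNatAt_LFunction_le (hΦ₁ : Φ 1 = 1) (hΦ : ∀ j, ‖Φ j‖ ≤ 1) (t : ℝ) :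
    ((∑ᶠ ρ ∈ criticalZeros Φ t, analyticOrderNatAt (ZMod.LFunction Φ) ρ : ℕ) : ℝ) ≤
      Real.log (108 * (∑' n : ℕ, (n + 1 : ℝ) ^ (-3 / 2 : ℝ) + 2) * (N * (|t| + 2)) ^ 3) /
        Real.log (25 / 21) := by
  have hX := two_le_natCast_mul_abs_add_two N t
  set X : ℝ := N * (|t| + 2)
  have hsum : 0 ≤ ∑' n : ℕ, (n + 1 : ℝ) ^ (-3 / 2 : ℝ) := tsum_nonneg fun n ↦ by positivity
  set K : ℝ := ∑' n : ℕ, (n + 1 : ℝ) ^ (-3 / 2 : ℝ) + 2 with hK_def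
  have hX₃ : 1 ≤ X ^ 3 := one_le_pow₀ (by linarith)
  have hcenter : 1 / 4 ≤ ‖LFunction₁ Φ (jensenCenter t)‖ :=
    one_quarter_le_norm_LFunction₁ hΦ₁ hΦ le_rfl
  have hratio : 27 * K * X ^ 3 / ‖LFunction₁ Φ (jensenCenter t)‖ ≤ 108 * K * X ^ 3 := by
    rw [div_le_iff₀ (by linarith)]
    nlinarith [show 0 < K * X ^ 3 by positivity]
  calc ((∑ᶠ ρ ∈ criticalZeros Φ t, analyticOrderNatAt (ZMod.LFunction Φ) ρ : ℕ) : ℝ)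
      = (∑ᶠ ρ ∈ criticalZeros Φ t, analyticOrderNatAt (LFunction₁ Φ) ρ : ℕ) := by
        rw [finsum_mem_congr rfl fun ρ ↦ analyticOrderNatAt_LFunction₁_of_mem_criticalZeros]
    _ ≤ Real.log (27 * K * X ^ 3 / ‖LFunction₁ Φ (jensenCenter t)‖) /
          Real.log ((5 / 2) / (21 / 10)) :=
        finsum_mem_analyticOrderNatAt_le_of_norm_le (by norm_num) (by norm_num)
          (one_le_mul_of_one_le_of_one_le (by linarith) hX₃)
          (analyticOnNhd_LFunction₁_closedBall_jensenCenter Φ t le_rfl)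
          (LFunction₁_ne_zero hΦ₁ hΦ le_rfl)
          (fun z hz ↦ norm_LFunction₁_le_of_mem_closedBall_jensenCenter hΦ
            (Metric.sphere_subset_closedBall hz))
          (criticalZeros_subset_closedBall Φ t)
    _ ≤ Real.log (108 * K * X ^ 3) / Real.log (25 / 21) := by
        rw [show (5 / 2 : ℝ) / (21 / 10) = 25 / 21 by norm_num]
        exact div_le_div_of_nonneg_right (Real.log_le_log (by positivity) hratio)
          (Real.log_nonneg (by norm_num))

end CriticalZeros

lemma exists_forall_finsum_analyticOrderNatAt_LFunction_le :
    ∃ C : ℝ, 0 < C ∧ ∀ (N : ℕ) [NeZero N] (Φ : ZMod N → ℂ), Φ 1 = 1 → (∀ j, ‖Φ j‖ ≤ 1) → ∀ t : ℝ,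
      ((∑ᶠ ρ ∈ criticalZeros Φ t, analyticOrderNatAt (ZMod.LFunction Φ) ρ : ℕ) : ℝ) ≤
        C * Real.log (N * (|t| + 2)) := by
  have hsum : 0 ≤ ∑' n : ℕ, (n + 1 : ℝ) ^ (-3 / 2 : ℝ) := tsum_nonneg fun n ↦ by positivity
  set K : ℝ := 108 * (∑' n : ℕ, (n + 1 : ℝ) ^ (-3 / 2 : ℝ) + 2) with hK_def
  have hK : 1 ≤ K := by linarith
  have hlogK : 0 ≤ Real.log K / Real.log 2 :=
    div_nonneg (Real.log_nonneg hK) (Real.log_nonneg one_le_two)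
  have hlog : 0 < Real.log (25 / 21) := Real.log_pos (by norm_num)
  refine ⟨(Real.log K / Real.log 2 + (3 : ℕ)) / Real.log (25 / 21),
    div_pos (by push_cast; linarith) hlog, fun N _ Φ hΦ₁ hΦ t ↦ ?_⟩
  rw [div_mul_eq_mul_div]
  exact (finsum_analyticOrderNatAt_LFunction_le hΦ₁ hΦ t).trans <|
    div_le_div_of_nonneg_right (log_mul_pow_le hK (two_le_natCast_mul_abs_add_two N t) 3) hlog.le

lemma log_natCast_mul_abs_add_two_le_of_mem_Icc {N : ℕ} [NeZero N] {T t : ℝ}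
    (ht : t ∈ Icc T (T + 1)) :
    Real.log (N * (|T| + 2)) ≤ 2 * Real.log (N * (|t| + 2)) := by
  have hX := two_le_natCast_mul_abs_add_two N t
  have habs : |T| ≤ |t| + 1 := by
    have hdist : |T - t| ≤ 1 := abs_le.mpr ⟨by linarith [ht.2], by linarith [ht.1]⟩
    linarith [abs_sub_abs_le_abs_sub T t]
  have hN : (0 : ℝ) < N := Nat.cast_pos.mpr (NeZero.pos N)
  calc Real.log (N * (|T| + 2)) ≤ Real.log ((N * (|t| + 2)) ^ 2) := by
        refine Real.log_le_log (by positivity) ?_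
        nlinarith [abs_nonneg t]
    _ = 2 * Real.log (N * (|t| + 2)) := by simp

lemma exists_mem_Ioc_forall_div_log_le_abs_sub {N : ℕ} [NeZero N] {Φ : ZMod N → ℂ} {C T : ℝ}
    (hC : 0 ≤ C) (hfin : (criticalZeros Φ T).Finite)
    (hcard : ((criticalZeros Φ T).ncard : ℝ) ≤ C * Real.log (N * (|T| + 2))) :
    ∃ t ∈ Ioc T (T + 1), ∀ ρ : ℂ, ZMod.LFunction Φ ρ = 0 → 0 < ρ.re → ρ.re < 1 →
      1 / (4 * (C + 1)) / Real.log (N * (|t| + 2)) ≤ |t - ρ.im| := by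
  classical
  let S : Finset ℝ := hfin.toFinset.image im
  have hS : (S.card : ℝ) ≤ C * Real.log (N * (|T| + 2)) := by
    refine le_trans (Nat.cast_le.mpr ?_) hcard
    rw [ncard_eq_toFinset_card _ hfin]
    exact Finset.card_image_le
  set δ : ℝ := 1 / (2 * (S.card + 1))
  have hδ : 0 < δ := by positivity
  obtain ⟨t, ht, htS⟩ := exists_forall_le_abs_sub S (a := T) (b := T + 1) hδ
    (by simp only [δ]; field_simp; linarith)
  refine ⟨t, ⟨by linarith [ht.1], by linarith [ht.2]⟩, fun ρ hρ hre₀ hre₁ ↦ ?_⟩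
  have hlog := log_natCast_mul_abs_add_two_le_of_mem_Icc (N := N) (T := T) (t := t)
    ⟨by linarith [ht.1], by linarith [ht.2]⟩
  have hlog_two : 1 / 2 ≤ Real.log (N * (|t| + 2)) := by
    have := Real.log_le_log two_pos (two_le_natCast_mul_abs_add_two N t)
    linarith [Real.log_two_gt_d9]
  have hgap : 1 / (4 * (C + 1)) / Real.log (N * (|t| + 2)) ≤ δ := by
    rw [div_div]
    exact one_div_le_one_div_of_le (by positivity) (by nlinarith)
  refine hgap.trans ?_
  rcases le_or_gt ρ.im T with hlow | hlow
  · exact le_trans (by linarith [ht.1]) (le_abs_self _)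
  rcases le_or_gt ρ.im (T + 1) with hhigh | hhigh
  · exact htS _ (Finset.mem_image_of_mem _ (hfin.mem_toFinset.mpr ⟨hρ, hre₀, hre₁, hlow, hhigh⟩))
  · exact le_trans (by linarith [ht.2]) (neg_le_abs _)

theorem zero_density_and_gap_general :
    ∃ C c : ℝ, 0 < C ∧ 0 < c ∧
      ∀ (q : ℕ) [NeZero q] (Φ : ZMod q → ℂ), Φ 1 = 1 → (∀ j, ‖Φ j‖ ≤ 1) →
        (∀ t : ℝ, (criticalZeros Φ t).Finite ∧
          (criticalZeros Φ t).ncard ≤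
            ∑ᶠ ρ ∈ criticalZeros Φ t, analyticOrderNatAt (ZMod.LFunction Φ) ρ ∧
          ((∑ᶠ ρ ∈ criticalZeros Φ t, analyticOrderNatAt (ZMod.LFunction Φ) ρ : ℕ) : ℝ) ≤
            C * Real.log (q * (|t| + 2))) ∧
        (∀ T₀ : ℝ, ∃ t ∈ Ioc T₀ (T₀ + 1),
          ∀ ρ : ℂ, ZMod.LFunction Φ ρ = 0 → 0 < ρ.re → ρ.re < 1 →
            c / Real.log (q * (|t| + 2)) ≤ |t - ρ.im|) := by
  obtain ⟨C, hC, hcount⟩ := exists_forall_finsum_analyticOrderNatAt_LFunction_le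
  refine ⟨C, 1 / (4 * (C + 1)), hC, by positivity, fun q _ Φ hΦ₁ hΦ ↦ ?_⟩
  have hfin := finite_criticalZeros hΦ₁ hΦ
  have hle (t : ℝ) := ncard_le_finsum_mem (hfin t)
    fun ρ ↦ analyticOrderNatAt_LFunction_ne_zero (t := t) hΦ₁ hΦ
  exact ⟨fun t ↦ ⟨hfin t, hle t, hcount q Φ hΦ₁ hΦ t⟩, fun T₀ ↦
    exists_mem_Ioc_forall_div_log_le_abs_sub hC.le (hfin T₀)
      ((Nat.cast_le.mpr (hle T₀)).trans (hcount q Φ hΦ₁ hΦ T₀))⟩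

/-- For `q ≥ 1`, a Dirichlet character `χ` mod `q`, and `t ≥ 0`, the number of
nontrivial zeros `ρ = β + iγ` of `L(s,χ)` with `0 < β < 1` and `t < γ ≤ t+1` is
`O(log(q(t+2)))`; consequently, for any `T₀ ≥ 0` there is `t ∈ (T₀, T₀+1]` whose
distance to every zero ordinate is `≫ 1/log(q(t+2))`. -/
theorem zero_density_and_gap :
    ∃ C c : ℝ, 0 < C ∧ 0 < c ∧
      ∀ (q : ℕ) [NeZero q] (χ : DirichletCharacter ℂ q),
        (∀ t : ℝ, 0 ≤ t →
          ({ρ : ℂ | DirichletCharacter.LFunction χ ρ = 0 ∧ 0 < ρ.re ∧ ρ.re < 1 ∧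
              t < ρ.im ∧ ρ.im ≤ t + 1}).Finite ∧
          (Nat.card {ρ : ℂ | DirichletCharacter.LFunction χ ρ = 0 ∧ 0 < ρ.re ∧ ρ.re < 1 ∧
              t < ρ.im ∧ ρ.im ≤ t + 1} : ℝ) ≤ C * Real.log ((q : ℝ) * (t + 2))) ∧
        (∀ T₀ : ℝ, 0 ≤ T₀ → ∃ t : ℝ, t ∈ Set.Ioc T₀ (T₀ + 1) ∧
          ∀ ρ : ℂ, DirichletCharacter.LFunction χ ρ = 0 → 0 < ρ.re → ρ.re < 1 →
            c / Real.log ((q : ℝ) * (t + 2)) ≤ |t - ρ.im|) := by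
  obtain ⟨C, c, hC, hc, h⟩ := zero_density_and_gap_general
  refine ⟨C, c, hC, hc, fun q _ χ ↦ ?_⟩
  obtain ⟨hcount, hgap⟩ := h q χ (map_one χ) χ.norm_le_one
  refine ⟨fun t ht ↦ ?_, fun T₀ hT₀ ↦ ?_⟩
  · obtain ⟨hfin, hncard, hle⟩ := hcount t
    exact ⟨hfin, (Nat.cast_le.mpr hncard).trans (by rwa [abs_of_nonneg ht] at hle)⟩
  · obtain ⟨t, ht, hρ⟩ := hgap T₀
    exact ⟨t, ht, by rwa [abs_of_pos (hT₀.trans_lt ht.1)] at hρ⟩
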